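/- Let L be a set and C : 2^L → 2^L satisfy Cautious Monotonicity (A ⊆ B ⊆ C(A) implies C(A) ⊆ C(B)) and Weak Compactness (if C(A) = L then there is a finite B ⊆ A with C(B) = L). Then every consistent set A ⊆ L is contained in some maximal consistent set B ⊆ L. -/

import Mathlib

/-!
When `C A` is the whole language, `B ⊆ C A` holds for every `B`, so Cautious Monotonicity makes
every superset of an inconsistent set inconsistent. Together with Weak Compactness this says that
the consistent sets form a family of finite character, and the Teichmüller–Tukey lemma applies.
-/

open Set Order

section Consistency

variable {L : Type*} {C : Set L → Set L} {A B : Set L}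

/-- Consistency of a set `A` of formulas with respect to the consequence operation `C`. -/
def IsConsistent (C : Set L → Set L) (A : Set L) : Prop := C A ≠ univ

/-- Cautious Monotonicity: adding consequences of `A` to `A` does not lose consequences. -/
def CautiouslyMonotone (C : Set L → Set L) : Prop := ∀ A B, A ⊆ B → B ⊆ C A → C A ⊆ C B

/-- Weak Compactness: compactness of `C` restricted to inconsistency, so that every inconsistent
set has a finite inconsistent subset. -/
def WeaklyCompact (C : Set L → Set L) : Prop :=
  ∀ A, C A = univ → ∃ B, B ⊆ A ∧ B.Finite ∧ C B = univ

theorem CautiouslyMonotone.eq_univ_of_subset (hC : CautiouslyMonotone C) (hAB : A ⊆ B)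
    (hA : C A = univ) : C B = univ :=
  eq_univ_of_univ_subset <| hA ▸ hC A B hAB (hA ▸ subset_univ B)

theorem CautiouslyMonotone.isLowerSet_isConsistent (hC : CautiouslyMonotone C) :
    IsLowerSet {A | IsConsistent C A} :=
  fun _ _ hAB hB hA => hB (hC.eq_univ_of_subset hAB hA)

theorem WeaklyCompact.isOfFiniteCharacter_isConsistent (hC : WeaklyCompact C)
    (hlower : IsLowerSet {A | IsConsistent C A}) :
    IsOfFiniteCharacter {A | IsConsistent C A} := by
  refine fun A => ⟨fun hA F hFA _ => hlower hFA hA, fun hfin hA => ?_⟩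
  obtain ⟨F, hFA, hF, hCF⟩ := hC A hA
  exact hfin F hFA hF hCF

theorem maximal_isConsistent_iff :
    Maximal (IsConsistent C) A ↔ IsConsistent C A ∧ ∀ B, A ⊂ B → C B = univ := by
  simp only [maximal_iff_forall_ssuperset, IsConsistent, not_not]

theorem stmt_16_general (hlower : IsLowerSet {A | IsConsistent C A}) (hC : WeaklyCompact C)
    (hA : IsConsistent C A) :
    ∃ B, A ⊆ B ∧ IsConsistent C B ∧ ∀ B', B ⊂ B' → C B' = univ := by
  obtain ⟨B, hAB, hB⟩ := (hC.isOfFiniteCharacter_isConsistent hlower).exists_maximal hA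
  exact ⟨B, hAB, maximal_isConsistent_iff.mp hB⟩

end Consistency

/-- Lindenbaum: under Cautious Monotonicity and Weak Compactness, every
consistent set extends to a maximal consistent set. -/
theorem stmt_16 {L : Type} (C : Set L → Set L)
    (hCM : ∀ A B : Set L, A ⊆ B → B ⊆ C A → C A ⊆ C B)
    (hWC : ∀ A : Set L, C A = Set.univ →
      ∃ B : Set L, B ⊆ A ∧ B.Finite ∧ C B = Set.univ) :
    ∀ A : Set L, C A ≠ Set.univ →
      ∃ B : Set L, A ⊆ B ∧ C B ≠ Set.univ ∧
        ∀ B' : Set L, B ⊂ B' → C B' = Set.univ := by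
  intro A hA
  exact stmt_16_general (CautiouslyMonotone.isLowerSet_isConsistent hCM) hWC hA
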